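/- arXiv:0909.3180 — 3 statements merged into one kernel-verified Lean document; each statement's English description precedes it below -/
import Mathlib

section
/- For every w ≥ 2, every feedback vertex set of the w × w grid graph has cardinality at least ⌊w/2⌋². (In particular, a w × w grid has a feedback vertex set of size at least c₁·w² only for a positive constant c₁; this is the quantitative form of the paper's claim that a (w × w)-grid has minimum feedback vertex set size Ω(w²).) -/
/-- The `w × w` grid graph: vertices are pairs in `Fin w × Fin w`, and two vertices
are adjacent iff they differ by exactly 1 in one coordinate and agree in the other. -/
def gridGraph (w : ℕ) : SimpleGraph (Fin w × Fin w) :=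
  SimpleGraph.fromRel (fun a b =>
    (a.1 = b.1 ∧ (a.2 : ℕ) + 1 = (b.2 : ℕ)) ∨ (a.2 = b.2 ∧ (a.1 : ℕ) + 1 = (b.1 : ℕ)))

/-!
A feedback vertex set contains a vertex of every cycle, so it is at least as large as any family of
pairwise vertex-disjoint cycles. In a box product `G □ H`, an edge of `G` and an edge of `H` span a
4-cycle, and the 4-cycles spanned by a matching of `G` and a matching of `H` are vertex-disjoint.
The grid is the box product of two paths on `w` vertices, each with a matching of `⌊w/2⌋` edges.
-/

open SimpleGraph Function

variable {V W ι κ : Type*} {G : SimpleGraph V} {H : SimpleGraph W}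

/-- `F` is a feedback vertex set of `G`: deleting the vertices in `F` leaves an acyclic graph. -/
def IsFeedbackVertexSet (G : SimpleGraph V) (F : Set V) : Prop :=
  (G.induce Fᶜ).IsAcyclic

namespace IsFeedbackVertexSet

theorem exists_mem_support {F : Set V} (hF : IsFeedbackVertexSet G F) {v : V} {c : G.Walk v v}
    (hc : c.IsCycle) : ∃ x ∈ c.support, x ∈ F := by
  by_contra! havoid
  refine hF (c.induce Fᶜ havoid) (.of_map (f := (Embedding.induce Fᶜ).toHom) ?_)
  rwa [Walk.map_induce]

theorem card_le_encard_of_disjoint_cycles {F : Set V} (hF : IsFeedbackVertexSet G F) {v : ι → V}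
    {c : ∀ i, G.Walk (v i) (v i)} (hc : ∀ i, (c i).IsCycle)
    (hdisj : Pairwise fun i j => (c i).support.Disjoint (c j).support) :
    ENat.card ι ≤ F.encard := by
  choose x hx hxF using fun i => hF.exists_mem_support (hc i)
  have hinj : Injective x := fun i j hij => by
    by_contra hne
    exact hdisj hne (hx i) (hij ▸ hx j)
  exact ENat.card_le_card_of_injective (f := fun i => (⟨x i, hxF i⟩ : F))
    fun i j hij => hinj (congrArg Subtype.val hij)

end IsFeedbackVertexSet

theorem isCycle_of_adj_four {a b c d : V} (hab : G.Adj a b) (hbc : G.Adj b c) (hcd : G.Adj c d)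
    (hda : G.Adj d a) (hac : a ≠ c) (hbd : b ≠ d) :
    (Walk.cons hab (.cons hbc (.cons hcd (.cons hda .nil)))).IsCycle := by
  refine (Walk.cons_isCycle_iff _ _).2 ⟨?_, ?_⟩
  · simp [hbc.ne, hcd.ne, hda.ne, hab.ne', hac.symm, hbd]
  · simp [hab.ne, hab.ne', hbc.ne, hda.ne', hac, hbd]

/-- The closed walk of length four around the square that an edge of `G` and an edge of `H` span in
`G □ H`. -/
def boxProdSquare {a a' : V} {b b' : W} (ha : G.Adj a a') (hb : H.Adj b b') :
    (G □ H).Walk (a, b) (a, b) :=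
  .cons (v := (a', b)) (boxProd_adj_left.2 ha) <|
  .cons (v := (a', b')) (boxProd_adj_right.2 hb) <|
  .cons (v := (a, b')) (boxProd_adj_left.2 ha.symm) <|
  .cons (boxProd_adj_right.2 hb.symm) .nil

theorem isCycle_boxProdSquare {a a' : V} {b b' : W} (ha : G.Adj a a') (hb : H.Adj b b') :
    (boxProdSquare ha hb).IsCycle :=
  isCycle_of_adj_four _ _ _ _ (fun h => ha.ne (congrArg Prod.fst h))
    (fun h => ha.ne' (congrArg Prod.fst h))

theorem mem_support_boxProdSquare {a a' : V} {b b' : W} (ha : G.Adj a a') (hb : H.Adj b b')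
    {p : V × W} :
    p ∈ (boxProdSquare ha hb).support ↔ p ∈ ({a, a'} : Set V) ×ˢ ({b, b'} : Set W) := by
  simp only [boxProdSquare, Walk.support_cons, Walk.support_nil, List.mem_cons, List.not_mem_nil,
    or_false, Prod.ext_iff, Set.mem_prod, Set.mem_insert_iff, Set.mem_singleton_iff]
  tauto

theorem IsFeedbackVertexSet.card_mul_card_le_encard_boxProd {F : Set (V × W)}
    (hF : IsFeedbackVertexSet (G □ H) F) {a a' : ι → V} {b b' : κ → W}
    (ha : ∀ i, G.Adj (a i) (a' i)) (hb : ∀ k, H.Adj (b k) (b' k))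
    (ha_disj : Pairwise (Disjoint on fun i => ({a i, a' i} : Set V)))
    (hb_disj : Pairwise (Disjoint on fun k => ({b k, b' k} : Set W))) :
    ENat.card ι * ENat.card κ ≤ F.encard := by
  rw [← ENat.card_prod]
  refine hF.card_le_encard_of_disjoint_cycles
    (fun p : ι × κ => isCycle_boxProdSquare (ha p.1) (hb p.2)) fun p q hpq x hxp hxq => ?_
  rw [mem_support_boxProdSquare] at hxp hxq
  refine Set.disjoint_left.1 (Set.disjoint_prod.2 ?_) hxp hxq
  rcases not_and_or.1 (mt Prod.ext_iff.2 hpq) with hfst | hsnd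
  · exact .inl (ha_disj hfst)
  · exact .inr (hb_disj hsnd)

theorem exists_matching_pathGraph (n : ℕ) :
    ∃ a a' : Fin (n / 2) → Fin n, (∀ i, (pathGraph n).Adj (a i) (a' i)) ∧
      Pairwise (Disjoint on fun i => ({a i, a' i} : Set (Fin n))) := by
  refine ⟨fun i => ⟨2 * i, by omega⟩, fun i => ⟨2 * i + 1, by omega⟩,
    fun i => pathGraph_adj.2 (.inl rfl), fun i j hij => Set.disjoint_left.2 fun x hxi hxj => ?_⟩
  simp only [Set.mem_insert_iff, Set.mem_singleton_iff, Fin.ext_iff] at hxi hxj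
  omega

theorem gridGraph_eq_boxProd (w : ℕ) : gridGraph w = pathGraph w □ pathGraph w := by
  ext a b
  simp only [gridGraph, fromRel_adj, boxProd_adj, pathGraph_adj, ne_eq, Prod.ext_iff, Fin.ext_iff]
  omega

/-- For every `w ≥ 2`, every feedback vertex set of the `w × w` grid graph has
cardinality at least `⌊w/2⌋²`. -/
theorem stmt_2 (w : ℕ) (hw : 2 ≤ w) (F : Finset (Fin w × Fin w))
    (hF : ((gridGraph w).induce ((F : Set (Fin w × Fin w))ᶜ)).IsAcyclic) :
    (w / 2) ^ 2 ≤ F.card := by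
  obtain ⟨a, a', hadj, hdisj⟩ := exists_matching_pathGraph w
  have hF' : IsFeedbackVertexSet (pathGraph w □ pathGraph w) (F : Set (Fin w × Fin w)) :=
    gridGraph_eq_boxProd w ▸ hF
  have hcard := hF'.card_mul_card_le_encard_boxProd hadj hadj hdisj hdisj
  rw [ENat.card_eq_coe_fintype_card, Fintype.card_fin, Set.encard_coe_eq_coe_finsetCard] at hcard
  rw [sq]
  exact_mod_cast hcard
end

section
/- For every finite simple graph G and every natural number k, the number of minimal vertex covers of G of cardinality at most k is at most 2^k. (This is the observation on which the known FPT-algorithms for Connected Vertex Cover rely.) -/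
/-- `C` is a vertex cover of `G`: every edge of `G` has at least one endpoint in `C`. -/
def IsVC {V : Type*} (G : SimpleGraph V) (C : Finset V) : Prop :=
  ∀ u v, G.Adj u v → u ∈ C ∨ v ∈ C

/-! A minimal vertex cover can be guessed one vertex at a time. Given a partial guess `S` contained
in `C`, either `S` is already a cover, and then `C = S` by minimality, or some edge avoids `S`, and
then `C` contains `insert x S` for one of the endpoints `x` of that edge. Branching over `x` at most
`k` times reaches every minimal cover of cardinality at most `k`. Only the bound `2` on the size of
an edge matters, so the same search works for hitting sets of families of sets of size at most `d`,
over an arbitrary ground set. -/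

open Finset

section HittingSet

variable {α : Type*} {𝓔 : Set (Finset α)} {E S : Finset α} {d n : ℕ}

/-- `C` is a hitting set, or transversal, of the family `𝓔` of finite sets: it meets every member.
Vertex covers are the hitting sets of the edges of a graph. -/
def IsHittingSet (𝓔 : Set (Finset α)) (C : Finset α) : Prop :=
  ∀ E ∈ 𝓔, ∃ x ∈ E, x ∈ C

/-- The minimal hitting sets of `𝓔` that arise from the partial guess `S` by adding at most `n`
points, that is, those found by the search of depth `n` started at `S`. -/
def minimalHittingExtensions (𝓔 : Set (Finset α)) (S : Finset α) (n : ℕ) : Set (Finset α) :=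
  {C | Minimal (IsHittingSet 𝓔) C ∧ S ⊆ C ∧ #C ≤ #S + n}

theorem minimalHittingExtensions_zero_subset : minimalHittingExtensions 𝓔 S 0 ⊆ {S} :=
  fun _ ⟨_, hSC, hcard⟩ ↦ (eq_of_subset_of_card_le hSC hcard).symm

theorem IsHittingSet.minimalHittingExtensions_subset (hS : IsHittingSet 𝓔 S) :
    minimalHittingExtensions 𝓔 S n ⊆ {S} :=
  fun _ ⟨hC, hSC, _⟩ ↦ (hC.eq_of_le hS hSC).symm

theorem minimalHittingExtensions_succ_subset_biUnion [DecidableEq α] (hE : E ∈ 𝓔)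
    (hES : Disjoint E S) :
    minimalHittingExtensions 𝓔 S (n + 1) ⊆
      ⋃ x ∈ E, minimalHittingExtensions 𝓔 (insert x S) n := by
  rintro C ⟨hC, hSC, hcard⟩
  obtain ⟨x, hxE, hxC⟩ := hC.prop E hE
  have hxS : x ∉ S := disjoint_left.mp hES hxE
  refine Set.mem_biUnion hxE ⟨hC, insert_subset hxC hSC, ?_⟩
  rw [card_insert_of_notMem hxS]
  lia

theorem encard_minimalHittingExtensions_le (hd : 1 ≤ d) (h𝓔 : ∀ E ∈ 𝓔, #E ≤ d) :
    (minimalHittingExtensions 𝓔 S n).encard ≤ d ^ n := by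
  classical
  induction n generalizing S with
  | zero => simpa using Set.encard_le_encard minimalHittingExtensions_zero_subset
  | succ n ih =>
    by_cases hS : IsHittingSet 𝓔 S
    · calc (minimalHittingExtensions 𝓔 S (n + 1)).encard
          ≤ ({S} : Set (Finset α)).encard :=
            Set.encard_le_encard hS.minimalHittingExtensions_subset
        _ = 1 := Set.encard_singleton S
        _ ≤ d ^ (n + 1) := one_le_pow₀ (mod_cast hd)
    · obtain ⟨E, hE, hES⟩ : ∃ E ∈ 𝓔, Disjoint E S := by
        simpa [IsHittingSet, disjoint_left] using hS
      calc (minimalHittingExtensions 𝓔 S (n + 1)).encard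
          ≤ (⋃ x ∈ E, minimalHittingExtensions 𝓔 (insert x S) n).encard :=
            Set.encard_le_encard (minimalHittingExtensions_succ_subset_biUnion hE hES)
        _ ≤ ∑ x ∈ E, (minimalHittingExtensions 𝓔 (insert x S) n).encard :=
            E.set_encard_biUnion_le _
        _ ≤ ∑ _x ∈ E, (d : ℕ∞) ^ n := sum_le_sum fun _ _ ↦ ih
        _ = #E * d ^ n := by rw [sum_const, nsmul_eq_mul]
        _ ≤ d * d ^ n := by gcongr; exact h𝓔 E hE
        _ = d ^ (n + 1) := (pow_succ' _ _).symm

theorem encard_minimal_isHittingSet_card_le (hd : 1 ≤ d) (h𝓔 : ∀ E ∈ 𝓔, #E ≤ d) (k : ℕ) :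
    {C | Minimal (IsHittingSet 𝓔) C ∧ #C ≤ k}.encard ≤ d ^ k := by
  simpa [minimalHittingExtensions] using
    encard_minimalHittingExtensions_le (S := ∅) (n := k) hd h𝓔

end HittingSet

theorem isVC_eq_isHittingSet {V : Type*} [DecidableEq V] (G : SimpleGraph V) :
    IsVC G = IsHittingSet (Sym2.toFinset '' G.edgeSet) := by
  ext C
  simp only [IsVC, IsHittingSet, Set.forall_mem_image, Sym2.forall, SimpleGraph.mem_edgeSet,
    Sym2.mem_toFinset, Sym2.mem_iff, exists_eq_or_imp, exists_eq_left]

theorem stmt_5_general {V : Type*} (G : SimpleGraph V) (k : ℕ) :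
    {C | Minimal (IsVC G) C ∧ #C ≤ k}.encard ≤ 2 ^ k := by
  classical
  have card_edge_le : ∀ E ∈ Sym2.toFinset '' G.edgeSet, #E ≤ 2 := by
    rintro _ ⟨e, he, rfl⟩
    exact (Sym2.card_toFinset_of_not_isDiag e (G.not_isDiag_of_mem_edgeSet he)).le
  rw [isVC_eq_isHittingSet]
  exact encard_minimal_isHittingSet_card_le one_le_two card_edge_le k

/-- For every finite simple graph `G` and every natural number `k`, the number of
minimal vertex covers of `G` of cardinality at most `k` is at most `2 ^ k`. -/
theorem stmt_5 {V : Type*} [Fintype V] [DecidableEq V] (G : SimpleGraph V) (k : ℕ) :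
    {C : Finset V |
        IsVC G C ∧ (∀ C' : Finset V, C' ⊂ C → ¬ IsVC G C') ∧ C.card ≤ k}.ncard ≤ 2 ^ k := by
  refine ENat.toNat_le_of_le_natCast ?_
  simpa [minimal_iff_forall_lt, and_assoc] using stmt_5_general G k
end

section
/- Let G = (V,E) be a finite simple graph, r ∈ V, S ⊆ V, and p ≥ 1. Then the following are equivalent: (i) G contains a tree (connected acyclic subgraph) on at most p vertices whose vertex set contains r and all of S; (ii) there exist a finite simple graph T that is a tree, a distinguished vertex ρ of T, and a graph homomorphism φ : T → G such that φ(ρ) = r, S ⊆ φ(V(T)), and T has at most p − 1 edges. (This is the undirected form of the equivalence between Steiner trees rooted at r and branching walks of length at most p − 1 from r, which underlies the polynomial-space inclusion–exclusion algorithm.) -/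
/-!
The homomorphic image of a connected graph is connected, so any spanning tree of the subgraph of `G`
induced on `φ(V(T))` is a tree in `G` with vertex set `φ(V(T))`. Passing to the image cannot
increase the number of vertices, and a tree has one more vertex than it has edges. Conversely, a
tree in `G` is itself the image of a tree homomorphism, namely its inclusion into `G`.
-/

section

variable {V W : Type*} {G : SimpleGraph V}

theorem connected_induce_range {T : SimpleGraph W} (hT : T.Connected) (φ : T →g G) :
    (G.induce (Set.range φ)).Connected :=
  let f : T →g G.induce (Set.range φ) := ⟨Set.rangeFactorization φ, φ.map_adj⟩
  hT.map f Set.rangeFactorization_surjective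

theorem exists_isTree_coe_verts_eq {s : Set V} (hs : (G.induce s).Connected) :
    ∃ H : G.Subgraph, H.coe.IsTree ∧ H.verts = s := by
  obtain ⟨T, hle, hT⟩ := hs.exists_isTree_le
  let f : T.Copy G := (SimpleGraph.Copy.induce G s).comp (.ofLE T (G.induce s) hle)
  have hverts : f.toSubgraph.verts = Set.range ((↑) : s → V) := Set.image_univ
  exact ⟨f.toSubgraph, f.isoToSubgraph.isTree_iff.mp hT, hverts.trans Subtype.range_coe⟩

theorem ncard_range_hom_le_ncard_edgeSet_add_one [Finite W] {T : SimpleGraph W}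
    (hT : T.Connected) (φ : T →g G) : (Set.range φ).ncard ≤ T.edgeSet.ncard + 1 :=
  (Finite.card_range_le φ).trans hT.card_vert_le_card_edgeSet_add_one

theorem exists_fin_isTree_hom_range_eq_verts {H : G.Subgraph} (hH : H.coe.IsTree)
    (hfin : H.verts.Finite) :
    ∃ (n : ℕ) (T : SimpleGraph (Fin n)), T.IsTree ∧
      ∃ φ : T →g G, Set.range φ = H.verts ∧ T.edgeSet.ncard + 1 = H.verts.ncard := by
  have := hfin.fintype
  let e : H.coe ≃g H.coe.overFin rfl := H.coe.overFinIso rfl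
  have hT : (H.coe.overFin rfl).IsTree := e.isTree_iff.mp hH
  refine ⟨_, _, hT, H.hom.comp e.symm.toHom, ?_, ?_⟩
  · exact (e.symm.surjective.range_comp H.hom).trans Subtype.range_coe
  · exact (SimpleGraph.isTree_iff_connected_and_card.mp hT).2.trans (Nat.card_congr e.symm.toEquiv)

-- For infinite `V` the bound has to be on `encard`, since `ncard` is `0` on infinite sets.
theorem stmt_10_general (G : SimpleGraph V) (r : V) (S : Set V) (p : ℕ) (hp : 1 ≤ p) :
    (∃ H : G.Subgraph, H.Connected ∧ H.coe.IsAcyclic ∧ r ∈ H.verts ∧ S ⊆ H.verts ∧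
        H.verts.encard ≤ p) ↔
      (∃ (n : ℕ) (T : SimpleGraph (Fin n)), T.Connected ∧ T.IsAcyclic ∧
        ∃ (ρ : Fin n) (φ : T →g G), φ ρ = r ∧ S ⊆ Set.range φ ∧
          T.edgeSet.ncard ≤ p - 1) := by
  simp only [Set.encard_le_coe_iff_finite_ncard_le]
  constructor
  · rintro ⟨H, hconn, hacyc, hr, hS, hfin, hcard⟩
    obtain ⟨n, T, hT, φ, hφ, hedges⟩ :=
      exists_fin_isTree_hom_range_eq_verts ⟨hconn.coe, hacyc⟩ hfin
    obtain ⟨ρ, hρ⟩ : r ∈ Set.range φ := hφ ▸ hr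
    exact ⟨n, T, hT.connected, hT.isAcyclic, ρ, φ, hρ, hφ ▸ hS, by lia⟩
  · rintro ⟨n, T, hT, -, ρ, φ, rfl, hS, hedges⟩
    obtain ⟨H, hH, hverts⟩ := exists_isTree_coe_verts_eq (connected_induce_range hT φ)
    have hcard := ncard_range_hom_le_ncard_edgeSet_add_one hT φ
    refine ⟨H, ⟨hH.connected⟩, hH.isAcyclic, ?_⟩
    rw [hverts]
    exact ⟨Set.mem_range_self ρ, hS, Set.finite_range φ, by lia⟩

end

/-- Equivalence between Steiner trees rooted at `r` and branching walks (tree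
homomorphisms) from `r`: `G` contains a tree on at most `p` vertices whose vertex
set contains `r` and all of `S` iff there is a finite tree `T`, a distinguished
vertex `ρ` of `T`, and a graph homomorphism `φ : T → G` with `φ ρ = r`,
`S ⊆ φ(V(T))`, and `T` having at most `p - 1` edges. -/
theorem stmt_10 {V : Type*} [Fintype V] (G : SimpleGraph V) (r : V) (S : Set V)
    (p : ℕ) (hp : 1 ≤ p) :
    (∃ H : G.Subgraph, H.Connected ∧ H.coe.IsAcyclic ∧ r ∈ H.verts ∧ S ⊆ H.verts ∧
        H.verts.ncard ≤ p) ↔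
      (∃ (n : ℕ) (T : SimpleGraph (Fin n)), T.Connected ∧ T.IsAcyclic ∧
        ∃ (ρ : Fin n) (φ : T →g G), φ ρ = r ∧ S ⊆ Set.range φ ∧
          T.edgeSet.ncard ≤ p - 1) := by
  simpa only [Set.encard_le_coe_iff_finite_ncard_le, Set.toFinite, true_and] using
    stmt_10_general G r S p hp
end
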